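/- Let A be an artin algebra with Jacobson radical J and Loewy length m ≥ 2, and B the ADR algebra End_A(⊕_{j=1}^m A/J^j). Then gl B ≤ m. (The chain of subcategories C_i = add(⊕_{j=1}^{m-i} (A/J^m)-quotients of Loewy length ≤ m−i) … concretely: add(⊕_{j=1}^m A/J^j) ⊃ add(⊕_{j=1}^{m-1} A/J^j) ⊃ … ⊃ add(A/J) ⊃ 0 is an A-total left rejective chain of length m, yielding the bound.) -/

import Mathlib

/-- The Jacobson radical of a ring `A`. -/
def jacobsonRad (A : Type) [Ring A] : Ideal A := Ideal.jacobson ⊥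

/-- The submodule `I • N` (span of products), valid over noncommutative rings. -/
def smulSub {A : Type} [Ring A] (I : Ideal A) {M : Type} [AddCommGroup M] [Module A M]
    (N : Submodule A M) : Submodule A M :=
  Submodule.span A {x | ∃ a ∈ I, ∃ y ∈ N, x = a • y}

/-- `radPow A M n` is the submodule `M J(A)^n` (written for left modules: `J(A)^n M`). -/
def radPow (A : Type) [Ring A] (M : Type) [AddCommGroup M] [Module A M] : ℕ → Submodule A M
  | 0 => ⊤
  | n + 1 => smulSub (jacobsonRad A) (radPow A M n)

lemma radPow_succ_le (A : Type) [Ring A] (M : Type) [AddCommGroup M] [Module A M] (n : ℕ) :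
    radPow A M (n + 1) ≤ radPow A M n := by
  show smulSub (jacobsonRad A) (radPow A M n) ≤ radPow A M n
  rw [smulSub, Submodule.span_le]
  rintro x ⟨a, _, y, hy, rfl⟩
  exact Submodule.smul_mem _ a hy

lemma radPow_le_one (A : Type) [Ring A] (M : Type) [AddCommGroup M] [Module A M]
    {j : ℕ} (hj : 1 ≤ j) : radPow A M j ≤ radPow A M 1 := by
  induction j with
  | zero => omega
  | succ n ih =>
    rcases Nat.lt_or_ge 1 (n+1) with h | h
    · exact le_trans (radPow_succ_le A M n) (ih (by omega))
    · have : n + 1 = 1 := by omega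
      rw [this]

/-- `X` belongs to `add M`: it is a direct summand of a finite direct sum of copies of `M`. -/
def InAdd (A : Type) [Ring A] (M : Type) [AddCommGroup M] [Module A M]
    (X : Type) [AddCommGroup X] [Module A X] : Prop :=
  ∃ (n : ℕ) (Y : Type) (_ : AddCommGroup Y) (_ : Module A Y),
    Nonempty ((X × Y) ≃ₗ[A] (Fin n → M))

/-- `f` lies in the Jacobson radical of the category of `A`-modules. -/
def IsRadMor (A : Type) [Ring A] {M N : Type} [AddCommGroup M] [Module A M]
    [AddCommGroup N] [Module A N] (f : M →ₗ[A] N) : Prop :=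
  ∀ g : N →ₗ[A] M, IsUnit ((1 : Module.End A M) - (g ∘ₗ f : Module.End A M))

/-- The ADR module `⊕_{j=1}^m A/J^j`. -/
abbrev ADRModule (A : Type) [Ring A] (m : ℕ) : Type :=
  ∀ j : Fin m, A ⧸ radPow A A (j.1 + 1)

/-- `pdLE B n M` : the `B`-module `M` admits a projective resolution of length at most `n`. -/
def pdLE (B : Type) [Ring B] : ℕ → (M : Type) → [AddCommGroup M] → [Module B M] → Prop
  | 0, M, _, _ => Module.Projective B M
  | n + 1, M, _, _ => ∃ (P : Type) (_ : AddCommGroup P) (_ : Module B P),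
      Module.Projective B P ∧ ∃ s : P →ₗ[B] M, Function.Surjective s ∧
        pdLE B n ↥(LinearMap.ker s)

/-
Let `B = End_A M` with `M = A/J × ⋯ × A/Jᵐ`, and let `P k = Hom_A(A/Jᵏ, M)` be the part of `M`
annihilated by `Jᵏ`. Since `A/Jᵏ` is a summand of `M`, each `P k` is projective over `B` and every
`B`-linear map `P k → M` is a homothety by an element of `A`. Hence the layer `Δ = P (k + 1) / P k`
receives no nonzero map from `P j` for `j ≤ k`, and `End_B Δ` is a quotient of the semisimple ring
`A/J`.

Suppose that `P 0, …, P k` have no nonzero map to a `B`-module `N`. By semisimplicity of `End_B Δ`,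
the evaluation map `Δ^(Hom(Δ, N)) → N` has the same image as its restriction to a direct summand
`X`, chosen so that `Δ` has no nonzero map to the kernel `K` of `X → N`. Then `P 0, …, P (k + 1)`
have no nonzero map to `K` or to the cokernel `C`. As `X` has projective dimension at most `1`,
descending induction on `k` bounds the projective dimension of `N` by `m - k`; it starts at `k = m`
because the `P k` generate `B`, and `k = 0` is the theorem, as `P 0 = 0`.
-/

section ProjectiveDimension

open CategoryTheory

universe u v

variable {B : Type u} [Ring B]

theorem shortExact_ker_subtype {Y Z : Type v} [AddCommGroup Y] [Module B Y] [AddCommGroup Z]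
    [Module B Z] (g : Y →ₗ[B] Z) (hg : Function.Surjective g) :
    (ShortComplex.mk (ModuleCat.ofHom g.ker.subtype) (ModuleCat.ofHom g)
      (by rw [← ModuleCat.ofHom_comp, LinearMap.comp_ker_subtype]; rfl)).ShortExact :=
  ModuleCat.shortComplex_shortExact _ g.exact_subtype_ker_map g.ker.injective_subtype hg

theorem hasProjectiveDimensionLT_succ_of_projective (Y : Type v) [AddCommGroup Y] [Module B Y]
    [Module.Projective B Y] (n : ℕ) :
    HasProjectiveDimensionLT (ModuleCat.of B Y) (n + 1) :=
  hasProjectiveDimensionLT_of_ge _ 1 _ (Nat.le_add_left 1 n)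

theorem hasProjectiveDimensionLT_of_retract {X Y : Type v} [AddCommGroup X] [Module B X]
    [AddCommGroup Y] [Module B Y] (i : X →ₗ[B] Y) (r : Y →ₗ[B] X) (hri : r ∘ₗ i = LinearMap.id)
    {n : ℕ} (hY : HasProjectiveDimensionLT (ModuleCat.of B Y) n) :
    HasProjectiveDimensionLT (ModuleCat.of B X) n :=
  Retract.hasProjectiveDimensionLT
    { i := ModuleCat.ofHom i
      r := ModuleCat.ofHom r
      retract := by rw [← ModuleCat.ofHom_comp, hri]; rfl } n

theorem hasProjectiveDimensionLT_of_ker_of_quotient_range {X N : Type v} [AddCommGroup X]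
    [Module B X] [AddCommGroup N] [Module B N] (φ : X →ₗ[B] N) {n : ℕ}
    (hX : HasProjectiveDimensionLT (ModuleCat.of B X) (n + 1))
    (hker : HasProjectiveDimensionLT (ModuleCat.of B φ.ker) n)
    (hquot : HasProjectiveDimensionLT (ModuleCat.of B (N ⧸ φ.range)) (n + 1)) :
    HasProjectiveDimensionLT (ModuleCat.of B N) (n + 1) := by
  have hrange : HasProjectiveDimensionLT (ModuleCat.of B φ.range) (n + 1) := by
    rw [← φ.ker_rangeRestrict] at hker
    exact (shortExact_ker_subtype φ.rangeRestrict φ.surjective_rangeRestrict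
      ).hasProjectiveDimensionLT_X₃ n hker hX
  rw [← φ.range.ker_mkQ] at hrange
  exact (shortExact_ker_subtype φ.range.mkQ φ.range.mkQ_surjective
    ).hasProjectiveDimensionLT_X₂ (n + 1) hrange hquot

theorem projective_finsupp (ι P : Type*) [AddCommGroup P] [Module B P] [Module.Projective B P] :
    Module.Projective B (ι →₀ P) := by
  classical
  exact .of_equiv (finsuppLequivDFinsupp (ι := ι) (M := P) B).symm

theorem hasProjectiveDimensionLT_two_finsupp_quotient (ι : Type v) {P : Type v}
    [AddCommGroup P] [Module B P] [Module.Projective B P] (Q : Submodule B P)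
    [Module.Projective B Q] : HasProjectiveDimensionLT (ModuleCat.of B (ι →₀ P ⧸ Q)) 2 := by
  let π : (ι →₀ P) →ₗ[B] (ι →₀ P ⧸ Q) := Finsupp.mapRange.linearMap Q.mkQ
  have hπ : Function.Surjective π := Finsupp.mapRange_surjective _ (map_zero _) Q.mkQ_surjective
  have hker : π.ker = (Finsupp.mapRange.linearMap (α := ι) Q.subtype).range := by
    rw [Finsupp.ker_mapRange, Finsupp.range_mapRange_linearMap _ Q.ker_subtype,
      Q.ker_mkQ, Q.range_subtype]
  have : Module.Projective B (ι →₀ P) := projective_finsupp ι P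
  have : Module.Projective B (ι →₀ Q) := projective_finsupp ι Q
  have : Module.Projective B π.ker := by
    rw [hker]
    exact .of_equiv (.ofInjective _
      (Finsupp.mapRange_injective _ (map_zero Q.subtype) Q.injective_subtype))
  exact (shortExact_ker_subtype π hπ).hasProjectiveDimensionLT_X₃ 1
    (hasProjectiveDimensionLT_succ_of_projective _ 0)
    (hasProjectiveDimensionLT_succ_of_projective _ 1)

end ProjectiveDimension

section HomVanishing

variable {B P N N' : Type*} [Ring B] [AddCommGroup P] [Module B P] [AddCommGroup N] [Module B N]
  [AddCommGroup N'] [Module B N']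

theorem subsingleton_linearMap_of_injective [Subsingleton (P →ₗ[B] N')] (g : N →ₗ[B] N')
    (hg : Function.Injective g) : Subsingleton (P →ₗ[B] N) :=
  ⟨fun _ _ => (LinearMap.cancel_left hg).1 (Subsingleton.elim _ _)⟩

theorem subsingleton_linearMap_of_surjective [Module.Projective B P] [Subsingleton (P →ₗ[B] N)]
    (g : N →ₗ[B] N') (hg : Function.Surjective g) : Subsingleton (P →ₗ[B] N') := by
  refine subsingleton_of_forall_eq 0 fun f => ?_
  obtain ⟨f', rfl⟩ := Module.projective_lifting_property g f hg
  rw [Subsingleton.elim f' 0, LinearMap.comp_zero]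

theorem subsingleton_linearMap_finsupp [Subsingleton (P →ₗ[B] N)] (ι : Type*) :
    Subsingleton (P →ₗ[B] ι →₀ N) := by
  refine subsingleton_of_forall_eq 0 fun f => LinearMap.ext fun x => Finsupp.ext fun i => ?_
  exact LinearMap.congr_fun (Subsingleton.elim (Finsupp.lapply i ∘ₗ f) 0) x

theorem exists_comp_mkQ_eq (Q : Submodule B P) [Subsingleton (Q →ₗ[B] N)] (f : P →ₗ[B] N) :
    ∃ g : P ⧸ Q →ₗ[B] N, g ∘ₗ Q.mkQ = f := by
  refine ⟨Q.liftQ f fun x hx => ?_, Q.liftQ_mkQ f _⟩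
  exact LinearMap.congr_fun (Subsingleton.elim (f ∘ₗ Q.subtype) 0) ⟨x, hx⟩

theorem subsingleton_linearMap_of_quotient (Q : Submodule B P) [Subsingleton (Q →ₗ[B] N)]
    [Subsingleton (P ⧸ Q →ₗ[B] N)] : Subsingleton (P →ₗ[B] N) := by
  refine subsingleton_of_forall_eq 0 fun f => ?_
  obtain ⟨g, rfl⟩ := exists_comp_mkQ_eq Q f
  rw [Subsingleton.elim g 0, LinearMap.zero_comp]

theorem subsingleton_of_iSup_range_eq_top {ι : Type*} {P : ι → Type*} [∀ i, AddCommGroup (P i)]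
    [∀ i, Module B (P i)] (hP : ⨆ i, ⨆ f : P i →ₗ[B] B, f.range = ⊤)
    [∀ i, Subsingleton (P i →ₗ[B] N)] : Subsingleton N := by
  refine subsingleton_of_forall_eq 0 fun x => ?_
  have hker : ⨆ i, ⨆ f : P i →ₗ[B] B, f.range ≤ (LinearMap.toSpanSingleton B N x).ker :=
    iSup₂_le fun i f => LinearMap.range_le_ker_iff.2 (Subsingleton.elim _ _)
  have hone : (1 : B) ∈ (LinearMap.toSpanSingleton B N x).ker := hker (hP ▸ Submodule.mem_top)
  rwa [LinearMap.mem_ker, LinearMap.toSpanSingleton_apply, one_smul] at hone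

end HomVanishing

section UniversalCover

variable {B Δ N : Type*} [Ring B] [AddCommGroup Δ] [Module B Δ] [AddCommGroup N] [Module B N]

variable (B Δ N) in
/-- The evaluation map `Δ^(Hom(Δ, N)) → N`, the universal map from a direct sum of copies of `Δ`
to `N`. -/
noncomputable def homEval : ((Δ →ₗ[B] N) →₀ Δ) →ₗ[B] N :=
  Finsupp.lsum ℕ id

theorem homEval_comp_lsingle (h : Δ →ₗ[B] N) : homEval B Δ N ∘ₗ Finsupp.lsingle h = h :=
  Finsupp.lsum_comp_lsingle _ _ _

theorem finsuppLinearMap_single_apply (h : Δ →ₗ[B] N) (a : Module.End B Δ) :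
    LinearMap.finsuppLinearMap ℕ (Finsupp.single h a) = Finsupp.lsingle h ∘ₗ a := by
  ext x h'
  rcases eq_or_ne h h' with rfl | hne
  · simp
  · simp [hne]

theorem lsum_comp_eq_apply_homEval_comp [Module.Finite B Δ] {X : Type*} [AddCommGroup X]
    [Module B X] (σ : (Δ →ₗ[B] N) →+ (Δ →ₗ[B] X))
    (hσ : ∀ (h : Δ →ₗ[B] N) (a : Module.End B Δ), σ (h ∘ₗ a) = σ h ∘ₗ a)
    (g : Δ →ₗ[B] (Δ →ₗ[B] N) →₀ Δ) :
    Finsupp.lsum ℕ σ ∘ₗ g = σ (homEval B Δ N ∘ₗ g) := by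
  obtain ⟨c, rfl⟩ :=
    (LinearMap.finsuppLinearMap_bijective_of_moduleFinite B Δ Δ (Δ →ₗ[B] N) ℕ).2 g
  induction c using Finsupp.induction_linear with
  | zero => rw [map_zero, LinearMap.comp_zero, LinearMap.comp_zero, map_zero]
  | add c c' hc hc' => rw [map_add, LinearMap.comp_add, LinearMap.comp_add, map_add, hc, hc']
  | single h a =>
    rw [finsuppLinearMap_single_apply, ← LinearMap.comp_assoc, Finsupp.lsum_comp_lsingle,
      ← LinearMap.comp_assoc, homEval_comp_lsingle, hσ]

/-- Over the semisimple ring `(End Δ)ᵐᵒᵖ`, the map `Hom(Δ, Δ^(H)) → Hom(Δ, N) = H` induced by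
evaluation splits, and a splitting is a family of maps `Δ → Δ^(H)` indexed by `H`. -/
theorem exists_homEval_splitting [Module.Finite B Δ] [IsSemisimpleRing (Module.End B Δ)] :
    ∃ ψ : Module.End B ((Δ →ₗ[B] N) →₀ Δ), homEval B Δ N ∘ₗ ψ = homEval B Δ N ∧
      ∀ g : Δ →ₗ[B] (Δ →ₗ[B] N) →₀ Δ, homEval B Δ N ∘ₗ g = 0 → ψ ∘ₗ g = 0 := by
  let D := (Module.End B Δ)ᵈᵐᵃ
  have : IsSemisimpleRing D := inferInstanceAs (IsSemisimpleRing (Module.End B Δ)ᵐᵒᵖ)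
  have : Module.Projective D (Δ →ₗ[B] N) := Module.projective_of_isSemisimpleRing _ _
  let evalComp : (Δ →ₗ[B] (Δ →ₗ[B] N) →₀ Δ) →ₗ[D] (Δ →ₗ[B] N) :=
    { toFun := fun g => homEval B Δ N ∘ₗ g
      map_add' := fun _ _ => LinearMap.comp_add _ _ _
      map_smul' := fun _ _ => rfl }
  obtain ⟨σ, hσ⟩ := Module.projective_lifting_property evalComp LinearMap.id
    fun h => ⟨Finsupp.lsingle h, homEval_comp_lsingle h⟩
  refine ⟨Finsupp.lsum ℕ σ.toAddMonoidHom, Finsupp.lhom_ext' fun h => ?_, fun g hg => ?_⟩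
  · rw [LinearMap.comp_assoc, Finsupp.lsum_comp_lsingle, homEval_comp_lsingle]
    exact LinearMap.congr_fun hσ h
  · rw [lsum_comp_eq_apply_homEval_comp σ.toAddMonoidHom
      (fun h a => map_smul σ (DomMulAct.mk a) h), hg, map_zero]

theorem exists_retract_homEval [Module.Finite B Δ] [IsSemisimpleRing (Module.End B Δ)] :
    ∃ (X : Submodule B ((Δ →ₗ[B] N) →₀ Δ)) (r : ((Δ →ₗ[B] N) →₀ Δ) →ₗ[B] X),
      r ∘ₗ X.subtype = LinearMap.id ∧
      Subsingleton (Δ →ₗ[B] (homEval B Δ N ∘ₗ X.subtype).ker) ∧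
      (homEval B Δ N ∘ₗ X.subtype).range = (homEval B Δ N).range := by
  obtain ⟨ψ, hev, hψ⟩ := exists_homEval_splitting (B := B) (Δ := Δ) (N := N)
  have hidem : ψ ∘ₗ ψ = ψ := by
    refine Finsupp.lhom_ext' fun h => ?_
    have := hψ (ψ ∘ₗ Finsupp.lsingle h - Finsupp.lsingle h) (by
      rw [LinearMap.comp_sub, ← LinearMap.comp_assoc, hev, sub_self])
    rwa [LinearMap.comp_sub, sub_eq_zero, ← LinearMap.comp_assoc] at this
  have hfix (x : ψ.range) : ψ x = x := by
    obtain ⟨_, y, rfl⟩ := x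
    exact LinearMap.congr_fun hidem y
  refine ⟨ψ.range, ψ.rangeRestrict, LinearMap.ext fun x => Subtype.ext (hfix x), ?_, ?_⟩
  · refine subsingleton_of_forall_eq 0 fun f => LinearMap.ext fun x => ?_
    have hzero := hψ (ψ.range.subtype ∘ₗ Submodule.subtype _ ∘ₗ f)
      (LinearMap.ext fun y => (f y).2)
    exact Subtype.ext (Subtype.ext ((hfix _).symm.trans (LinearMap.congr_fun hzero x)))
  · rw [LinearMap.range_comp, Submodule.range_subtype, ← LinearMap.range_comp, hev]

theorem range_le_range_homEval (h : Δ →ₗ[B] N) : h.range ≤ (homEval B Δ N).range := by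
  conv_lhs => rw [← homEval_comp_lsingle h]
  exact LinearMap.range_comp_le_range _ _

theorem subsingleton_linearMap_quotient_range_homEval {P : Type*} [AddCommGroup P] [Module B P]
    [Module.Projective B P] (Q : Submodule B P) [Subsingleton (Q →ₗ[B] N)] :
    Subsingleton (P →ₗ[B] N ⧸ (homEval B (P ⧸ Q) N).range) := by
  refine subsingleton_of_forall_eq 0 fun f => ?_
  obtain ⟨f', rfl⟩ := Module.projective_lifting_property _ f (Submodule.mkQ_surjective _)
  obtain ⟨g, rfl⟩ := exists_comp_mkQ_eq Q f'
  have hg : Submodule.mkQ (homEval B (P ⧸ Q) N).range ∘ₗ g = 0 :=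
    LinearMap.range_le_ker_iff.1 ((range_le_range_homEval g).trans_eq (Submodule.ker_mkQ _).symm)
  rw [← LinearMap.comp_assoc, hg, LinearMap.zero_comp]

end UniversalCover

section HeredityChain

open CategoryTheory

universe u v

variable {B : Type u} [Ring B] {M : Type v} [AddCommGroup M] [Module B M]

/-- The quotient `Q / (P ∩ Q)`, used for nested submodules `P ≤ Q`. -/
abbrev subquotient (P Q : Submodule B M) : Type v :=
  Q ⧸ P.submoduleOf Q

/-- A chain `0 = P 0 ≤ P 1 ≤ ⋯ ≤ P m` of finitely generated projective modules exhibiting `B` as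
a strongly quasi-hereditary ring with standard modules the layers `P (k + 1) / P k`. The chain is
encoded as an infinite sequence of which only the terms up to `P m` matter. -/
structure IsStronglyHeredityChain (P : ℕ → Submodule B M) (m : ℕ) : Prop where
  zero_eq_bot : P 0 = ⊥
  le_succ : ∀ k < m, P k ≤ P (k + 1)
  projective : ∀ k ≤ m, Module.Projective B (P k)
  finite : ∀ k ≤ m, Module.Finite B (P k)
  subsingleton_linearMap_layer :
    ∀ k < m, ∀ j ≤ k, Subsingleton (P j →ₗ[B] subquotient (P k) (P (k + 1)))
  isSemisimpleRing_end_layer :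
    ∀ k < m, IsSemisimpleRing (Module.End B (subquotient (P k) (P (k + 1))))
  iSup_range_eq_top : ⨆ j : Fin (m + 1), ⨆ f : P j →ₗ[B] B, f.range = ⊤

namespace IsStronglyHeredityChain

variable {P : ℕ → Submodule B M} {m : ℕ}

theorem hasProjectiveDimensionLT_two_finsupp_layer (hP : IsStronglyHeredityChain P m) {k : ℕ}
    (hk : k < m) (ι : Type v) :
    HasProjectiveDimensionLT (ModuleCat.of B (ι →₀ subquotient (P k) (P (k + 1)))) 2 := by
  have := hP.projective k hk.le
  have := hP.projective (k + 1) hk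
  have : Module.Projective B ((P k).submoduleOf (P (k + 1))) :=
    .of_equiv (Submodule.submoduleOfEquivOfLe (hP.le_succ k hk)).symm
  exact hasProjectiveDimensionLT_two_finsupp_quotient ι _

theorem subsingleton_linearMap_submoduleOf (hP : IsStronglyHeredityChain P m) {k : ℕ} (hk : k < m)
    {N : Type*} [AddCommGroup N] [Module B N] [Subsingleton (P k →ₗ[B] N)] :
    Subsingleton ((P k).submoduleOf (P (k + 1)) →ₗ[B] N) :=
  ((Submodule.submoduleOfEquivOfLe (hP.le_succ k hk)).congrLeft N ℕ).subsingleton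

theorem subsingleton_linearMap_succ_of_layer (hP : IsStronglyHeredityChain P m) {k : ℕ}
    (hk : k < m) {N : Type*} [AddCommGroup N] [Module B N]
    (hN : ∀ j ≤ k, Subsingleton (P j →ₗ[B] N))
    [Subsingleton (subquotient (P k) (P (k + 1)) →ₗ[B] N)] :
    ∀ j ≤ k + 1, Subsingleton (P j →ₗ[B] N) := by
  intro j hj
  rcases Nat.le_succ_iff.1 hj with hj | rfl
  · exact hN j hj
  · have := hN k le_rfl
    have := hP.subsingleton_linearMap_submoduleOf hk (N := N)
    exact subsingleton_linearMap_of_quotient ((P k).submoduleOf (P (k + 1)))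

theorem subsingleton_linearMap_quotient_range_homEval_layer (hP : IsStronglyHeredityChain P m)
    {k : ℕ} (hk : k < m) {N : Type*} [AddCommGroup N] [Module B N]
    (hN : ∀ j ≤ k, Subsingleton (P j →ₗ[B] N)) :
    ∀ j ≤ k + 1,
      Subsingleton (P j →ₗ[B] N ⧸ (homEval B (subquotient (P k) (P (k + 1))) N).range) := by
  intro j hj
  have := hP.projective j (hj.trans hk)
  rcases Nat.le_succ_iff.1 hj with hj | rfl
  · have := hN j hj
    exact subsingleton_linearMap_of_surjective _ (Submodule.mkQ_surjective _)
  · have := hN k le_rfl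
    have := hP.subsingleton_linearMap_submoduleOf hk (N := N)
    exact subsingleton_linearMap_quotient_range_homEval _

theorem exists_approximation (hP : IsStronglyHeredityChain P m) {k : ℕ} (hk : k < m)
    (N : Type v) [AddCommGroup N] [Module B N] (hN : ∀ j ≤ k, Subsingleton (P j →ₗ[B] N)) :
    ∃ (X : Type v) (_ : AddCommGroup X) (_ : Module B X) (φ : X →ₗ[B] N),
      HasProjectiveDimensionLT (ModuleCat.of B X) 2 ∧
      (∀ j ≤ k + 1, Subsingleton (P j →ₗ[B] φ.ker)) ∧
      ∀ j ≤ k + 1, Subsingleton (P j →ₗ[B] N ⧸ φ.range) := by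
  have := hP.finite (k + 1) hk
  have := hP.isSemisimpleRing_end_layer k hk
  obtain ⟨X, r, hr, hker, hrange⟩ :=
    exists_retract_homEval (B := B) (Δ := subquotient (P k) (P (k + 1))) (N := N)
  have hX (j : ℕ) (hj : j ≤ k) : Subsingleton (P j →ₗ[B] X) := by
    have := hP.subsingleton_linearMap_layer k hk j hj
    have := subsingleton_linearMap_finsupp (B := B) (P := P j)
      (N := subquotient (P k) (P (k + 1))) (subquotient (P k) (P (k + 1)) →ₗ[B] N)
    exact subsingleton_linearMap_of_injective X.subtype X.injective_subtype
  refine ⟨X, inferInstance, inferInstance, homEval B _ N ∘ₗ X.subtype,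
    hasProjectiveDimensionLT_of_retract _ r hr (hP.hasProjectiveDimensionLT_two_finsupp_layer hk _),
    hP.subsingleton_linearMap_succ_of_layer hk fun j hj => ?_, ?_⟩
  · have := hX j hj
    exact subsingleton_linearMap_of_injective _ (Submodule.injective_subtype _)
  · rw [hrange]
    exact hP.subsingleton_linearMap_quotient_range_homEval_layer hk hN

theorem hasProjectiveDimensionLT_of_subsingleton_linearMap (hP : IsStronglyHeredityChain P m)
    {k d : ℕ} (hkd : k + d = m) (N : Type v) [AddCommGroup N] [Module B N]
    (hN : ∀ j ≤ k, Subsingleton (P j →ₗ[B] N)) :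
    HasProjectiveDimensionLT (ModuleCat.of B N) (d + 1) := by
  induction d generalizing k N with
  | zero =>
    obtain rfl : k = m := hkd
    have (j : Fin (k + 1)) : Subsingleton (P j →ₗ[B] N) := hN j (Nat.le_of_lt_succ j.2)
    have : Subsingleton N := subsingleton_of_iSup_range_eq_top hP.iSup_range_eq_top
    exact hasProjectiveDimensionLT_succ_of_projective N 0
  | succ d ih =>
    obtain ⟨X, _, _, φ, hX, hker, hquot⟩ := hP.exists_approximation (by lia : k < m) N hN
    have hker := ih (by lia) φ.ker hker
    have hquot := ih (by lia) (N ⧸ φ.range) hquot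
    exact hasProjectiveDimensionLT_of_ker_of_quotient_range φ
      (hasProjectiveDimensionLT_of_ge _ 2 _ (by lia)) hker
      (hasProjectiveDimensionLT_of_ge _ (d + 1) _ (Nat.le_succ _))

theorem hasProjectiveDimensionLT (hP : IsStronglyHeredityChain P m) (N : Type v) [AddCommGroup N]
    [Module B N] : HasProjectiveDimensionLT (ModuleCat.of B N) (m + 1) := by
  refine hP.hasProjectiveDimensionLT_of_subsingleton_linearMap (Nat.zero_add m) N fun j hj => ?_
  obtain rfl := Nat.le_zero.1 hj
  rw [hP.zero_eq_bot]
  infer_instance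

end IsStronglyHeredityChain

end HeredityChain

section IdealTorsion

variable {A : Type*} [Ring A] {M : Type*} [AddCommGroup M] [Module A M]

variable (M) in
/-- The elements of the `A`-module `M` annihilated by the ideal `I`, as a submodule over `End_A M`;
this is `Hom_A(A/I, M)`. -/
def idealTorsion (I : Ideal A) : Submodule (Module.End A M) M where
  carrier := {x | ∀ a ∈ I, a • x = 0}
  add_mem' hx hy a ha := by rw [smul_add, hx a ha, hy a ha, add_zero]
  zero_mem' a _ := smul_zero a
  smul_mem' b x hx a ha := by rw [Module.End.smul_def, ← map_smul, hx a ha, map_zero]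

theorem idealTorsion_anti {I I' : Ideal A} (h : I ≤ I') : idealTorsion M I' ≤ idealTorsion M I :=
  fun _ hx a ha => hx a (h ha)

theorem idealTorsion_top : idealTorsion M (⊤ : Ideal A) = ⊥ :=
  (Submodule.eq_bot_iff _).2 fun x hx => by simpa only [one_smul] using hx 1 Submodule.mem_top

theorem smul_mem_idealTorsion {I : Ideal A} [I.IsTwoSided] (a : A) {x : M}
    (hx : x ∈ idealTorsion M I) : a • x ∈ idealTorsion M I :=
  fun b hb => by rw [smul_smul, hx _ (I.mul_mem_right a hb)]

section Summand

variable {I : Ideal A} (i : A ⧸ I →ₗ[A] M) (r : M →ₗ[A] A ⧸ I)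

/-- The `A`-linear map `A/I → M` with value `x` at `1`. -/
def idealTorsionLift (x : idealTorsion M I) : A ⧸ I →ₗ[A] M :=
  I.liftQ (LinearMap.toSpanSingleton A M x) x.2

theorem idealTorsionLift_mk (x : idealTorsion M I) (a : A) :
    idealTorsionLift x (Submodule.Quotient.mk a) = a • (x : M) := rfl

theorem idealTorsionLift_add (x y : idealTorsion M I) :
    idealTorsionLift (x + y) = idealTorsionLift x + idealTorsionLift y :=
  Submodule.linearMap_qext I (LinearMap.ext fun a => smul_add a (x : M) y)

theorem idealTorsionLift_smul (b : Module.End A M) (x : idealTorsion M I) :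
    idealTorsionLift (b • x) = b ∘ₗ idealTorsionLift x :=
  Submodule.linearMap_qext I (LinearMap.ext fun a => (b.map_smul a (x : M)).symm)

/-- The `End_A M`-linear map `Hom_A(A/I, M) → End_A M` given by precomposition with
`r : M → A/I`. -/
def idealTorsionToEnd (r : M →ₗ[A] A ⧸ I) :
    idealTorsion M I →ₗ[Module.End A M] Module.End A M where
  toFun x := idealTorsionLift x ∘ₗ r
  map_add' x y := by rw [idealTorsionLift_add, LinearMap.add_comp]
  map_smul' b x := by rw [idealTorsionLift_smul]; rfl

theorem idealTorsionToEnd_apply (x : idealTorsion M I) (z : M) :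
    idealTorsionToEnd r x z = idealTorsionLift x (r z) := rfl

/-- The image of `1` under `i : A/I → M`; it generates the torsion submodule when `i` is split. -/
def idealTorsionGenerator : idealTorsion M I :=
  ⟨i (Submodule.Quotient.mk 1), fun a ha => by
    rw [← map_smul, ← Submodule.Quotient.mk_smul, smul_eq_mul, mul_one,
      (Submodule.Quotient.mk_eq_zero I).2 ha, map_zero]⟩

theorem idealTorsionToEnd_idealTorsionGenerator :
    idealTorsionToEnd r (idealTorsionGenerator i) = i ∘ₗ r :=
  congrArg (· ∘ₗ r) (Submodule.linearMap_qext I (LinearMap.ext_ring (one_smul A _)))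

theorem comp_mem_range_idealTorsionToEnd : i ∘ₗ r ∈ (idealTorsionToEnd r).range :=
  ⟨_, idealTorsionToEnd_idealTorsionGenerator i r⟩

variable {i r} (hri : r ∘ₗ i = LinearMap.id)

include hri

theorem idealTorsionToEnd_apply_idealTorsionGenerator (x : idealTorsion M I) :
    idealTorsionToEnd r x (idealTorsionGenerator i) = x := by
  have hr : r (idealTorsionGenerator i) = Submodule.Quotient.mk 1 := LinearMap.congr_fun hri _
  rw [idealTorsionToEnd_apply, hr, idealTorsionLift_mk, one_smul]

theorem projective_idealTorsion : Module.Projective (Module.End A M) (idealTorsion M I) :=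
  .of_split (idealTorsionToEnd r) (LinearMap.toSpanSingleton _ _ (idealTorsionGenerator i))
    (LinearMap.ext fun x => Subtype.ext (idealTorsionToEnd_apply_idealTorsionGenerator hri x))

theorem finite_idealTorsion : Module.Finite (Module.End A M) (idealTorsion M I) :=
  .of_surjective (LinearMap.toSpanSingleton _ _ (idealTorsionGenerator i))
    fun x => ⟨idealTorsionToEnd r x,
      Subtype.ext (idealTorsionToEnd_apply_idealTorsionGenerator hri x)⟩

theorem exists_forall_apply_eq_smul (f : idealTorsion M I →ₗ[Module.End A M] M) :
    ∃ a : A, ∀ x, f x = a • (x : M) := by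
  have hf (x) : f x = idealTorsionToEnd r x (f (idealTorsionGenerator i)) := by
    rw [← Module.End.smul_def, ← map_smul]
    exact congrArg f (Subtype.ext (idealTorsionToEnd_apply_idealTorsionGenerator hri x).symm)
  obtain ⟨a, ha⟩ := I.mkQ_surjective (r (f (idealTorsionGenerator i)))
  exact ⟨a, fun x => by rw [hf, idealTorsionToEnd_apply, ← ha, Submodule.mkQ_apply,
    idealTorsionLift_mk]⟩

end Summand

section Layer

variable {I I' : Ideal A} [I.IsTwoSided]

theorem subsingleton_linearMap_subquotient_idealTorsion {L : Ideal A} {i : A ⧸ L →ₗ[A] M}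
    {r : M →ₗ[A] A ⧸ L} (hri : r ∘ₗ i = LinearMap.id) (hL : I ≤ L) :
    Subsingleton (idealTorsion M L →ₗ[Module.End A M]
      subquotient (idealTorsion M I) (idealTorsion M I')) := by
  have := projective_idealTorsion hri
  refine subsingleton_of_forall_eq 0 fun f => ?_
  obtain ⟨f, rfl⟩ := Module.projective_lifting_property _ f (Submodule.mkQ_surjective _)
  obtain ⟨a, ha⟩ := exists_forall_apply_eq_smul hri (Submodule.subtype _ ∘ₗ f)
  refine LinearMap.ext fun x => (Submodule.Quotient.mk_eq_zero _).2 ?_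
  have hax := smul_mem_idealTorsion a (idealTorsion_anti hL x.2)
  rwa [← ha x] at hax

variable (M I I') [I'.IsTwoSided]

/-- The homotheties of `M` act on the layers of its torsion submodules. -/
def layerHomothety :
    A →+* Module.End (Module.End A M) (subquotient (idealTorsion M I) (idealTorsion M I')) where
  toFun a := Submodule.mapQ _ _
    ((Module.toModuleEnd (Module.End A M) M a).restrict fun _ hx => smul_mem_idealTorsion a hx)
    fun _ hx => smul_mem_idealTorsion a hx
  map_one' := Submodule.linearMap_qext _ <| LinearMap.ext fun x =>
    congrArg (Submodule.mkQ _) (Subtype.ext (one_smul A (x : M)))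
  map_zero' := Submodule.linearMap_qext _ <| LinearMap.ext fun x =>
    (congrArg (Submodule.mkQ _) (Subtype.ext (zero_smul A (x : M)))).trans (map_zero _)
  map_add' a b := Submodule.linearMap_qext _ <| LinearMap.ext fun x =>
    congrArg (Submodule.mkQ _) (Subtype.ext (add_smul a b (x : M)))
  map_mul' a b := Submodule.linearMap_qext _ <| LinearMap.ext fun x =>
    congrArg (Submodule.mkQ _) (Subtype.ext (mul_smul a b (x : M)))

theorem layerHomothety_mkQ (a : A) (x : idealTorsion M I') :
    layerHomothety M I I' a (Submodule.mkQ _ x) =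
      Submodule.mkQ _ ⟨a • (x : M), smul_mem_idealTorsion a x.2⟩ := rfl

variable {M I I'}

theorem layerHomothety_eq_zero {J : Ideal A} (hJ : I * J ≤ I') {a : A} (ha : a ∈ J) :
    layerHomothety M I I' a = 0 := by
  refine Submodule.linearMap_qext _ (LinearMap.ext fun x => ?_)
  refine (Submodule.Quotient.mk_eq_zero _).2 fun b hb => ?_
  exact (smul_smul b a (x : M)).trans (x.2 _ (hJ (Ideal.mul_mem_mul hb ha)))

variable {i : A ⧸ I' →ₗ[A] M} {r : M →ₗ[A] A ⧸ I'} (hri : r ∘ₗ i = LinearMap.id)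

include hri

theorem layerHomothety_surjective : Function.Surjective (layerHomothety M I I') := by
  intro g
  have := projective_idealTorsion hri
  obtain ⟨f, hf⟩ := Module.projective_lifting_property _
    (g ∘ₗ Submodule.mkQ _) (Submodule.mkQ_surjective ((idealTorsion M I).submoduleOf _))
  obtain ⟨a, ha⟩ := exists_forall_apply_eq_smul hri (Submodule.subtype _ ∘ₗ f)
  refine ⟨a, Submodule.linearMap_qext _ (LinearMap.ext fun x => ?_)⟩
  rw [← hf, LinearMap.comp_apply, LinearMap.comp_apply, layerHomothety_mkQ]
  exact congrArg _ (Subtype.ext (ha x).symm)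

theorem isSemisimpleRing_end_subquotient_idealTorsion {J : Ideal A} [J.IsTwoSided]
    [IsSemisimpleRing (A ⧸ J)] (hJ : I * J ≤ I') :
    IsSemisimpleRing
      (Module.End (Module.End A M) (subquotient (idealTorsion M I) (idealTorsion M I'))) :=
  RingHom.isSemisimpleRing_of_surjective
    (Ideal.Quotient.lift J (layerHomothety M I I') fun _ ha => layerHomothety_eq_zero hJ ha)
    (Ideal.Quotient.lift_surjective_of_surjective _ _ (layerHomothety_surjective hri))

end Layer

end IdealTorsion

section PowerQuotients

theorem sum_single_comp_proj (A : Type*) [Ring A] {ι : Type*} [Fintype ι] [DecidableEq ι]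
    (M : ι → Type*) [∀ i, AddCommGroup (M i)] [∀ i, Module A (M i)] :
    ∑ i, LinearMap.single A M i ∘ₗ LinearMap.proj i = (1 : Module.End A (∀ i, M i)) := by
  refine LinearMap.ext fun x => ?_
  rw [LinearMap.sum_apply]
  exact Finset.univ_sum_single x

variable {A : Type*} [Ring A] (J : Ideal A)

/-- The `A`-module `A/J × A/J² × ⋯ × A/Jᵐ`. -/
abbrev PowerQuotients (m : ℕ) : Type _ := ∀ j : Fin m, A ⧸ J ^ (j.1 + 1)

variable (m : ℕ)

theorem exists_retraction_powerQuotients {k : ℕ} (hk : k ≤ m) :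
    ∃ (i : A ⧸ J ^ k →ₗ[A] PowerQuotients J m) (r : PowerQuotients J m →ₗ[A] A ⧸ J ^ k),
      r ∘ₗ i = LinearMap.id := by
  cases k with
  | zero =>
    have : Subsingleton (A ⧸ J ^ 0) :=
      Ideal.Quotient.subsingleton_iff.2 Ideal.one_eq_top
    exact ⟨0, 0, LinearMap.ext fun _ => Subsingleton.elim _ _⟩
  | succ k =>
    let j : Fin m := ⟨k, hk⟩
    exact ⟨LinearMap.single A (fun j : Fin m => A ⧸ J ^ (j.1 + 1)) j, LinearMap.proj j,
      LinearMap.proj_comp_single_same A (fun j : Fin m => A ⧸ J ^ (j.1 + 1)) j⟩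

theorem iSup_range_idealTorsion_powerQuotients :
    ⨆ k : Fin (m + 1), ⨆ f : idealTorsion (PowerQuotients J m) (J ^ k.1) →ₗ[
      Module.End A (PowerQuotients J m)] Module.End A (PowerQuotients J m), f.range = ⊤ := by
  rw [Ideal.eq_top_iff_one, ← sum_single_comp_proj A fun j : Fin m => A ⧸ J ^ (j.1 + 1)]
  refine Submodule.sum_mem _ fun j _ => Submodule.mem_iSup_of_mem j.succ ?_
  exact Submodule.mem_iSup_of_mem _ (comp_mem_range_idealTorsionToEnd _ _)

theorem isStronglyHeredityChain_idealTorsion_pow [J.IsTwoSided] [IsSemisimpleRing (A ⧸ J)] :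
    IsStronglyHeredityChain (fun k => idealTorsion (PowerQuotients J m) (J ^ k)) m where
  zero_eq_bot := by rw [Submodule.pow_zero, Ideal.one_eq_top, idealTorsion_top]
  le_succ k _ := idealTorsion_anti (Ideal.pow_le_pow_right k.le_succ)
  projective k hk :=
    have ⟨_, _, hri⟩ := exists_retraction_powerQuotients J m hk
    projective_idealTorsion hri
  finite k hk :=
    have ⟨_, _, hri⟩ := exists_retraction_powerQuotients J m hk
    finite_idealTorsion hri
  subsingleton_linearMap_layer k hk j hj :=
    have ⟨_, _, hri⟩ := exists_retraction_powerQuotients J m (hj.trans hk.le)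
    subsingleton_linearMap_subquotient_idealTorsion hri (Ideal.pow_le_pow_right hj)
  isSemisimpleRing_end_layer k hk :=
    have ⟨_, _, hri⟩ := exists_retraction_powerQuotients J m hk
    isSemisimpleRing_end_subquotient_idealTorsion hri (Submodule.pow_succ J).ge
  iSup_range_eq_top := iSup_range_idealTorsion_powerQuotients J m

end PowerQuotients

open CategoryTheory in
theorem pdLE_of_hasProjectiveDimensionLT {B : Type} [Ring B] {n : ℕ} {N : Type} [AddCommGroup N]
    [Module B N] (hN : HasProjectiveDimensionLT (ModuleCat.of B N) (n + 1)) : pdLE B n N := by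
  induction n generalizing N with
  | zero =>
    exact (IsProjective.iff_projective N).2 (projective_iff_hasProjectiveDimensionLT_one.2 hN)
  | succ n ih =>
    let g := Finsupp.linearCombination B (id : N → N)
    have hg : Function.Surjective g := Finsupp.linearCombination_id_surjective B N
    exact ⟨N →₀ B, inferInstance, inferInstance, inferInstance, g, hg,
      ih ((shortExact_ker_subtype g hg).hasProjectiveDimensionLT_X₁ (n + 1)
        (hasProjectiveDimensionLT_succ_of_projective _ n) hN)⟩

theorem smulSub_eq_smul {A M : Type} [Ring A] [AddCommGroup M] [Module A M] (I : Ideal A)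
    (N : Submodule A M) : smulSub I N = I • N := by
  refine le_antisymm (Submodule.span_le.2 ?_) (Submodule.smul_le.2 fun a ha x hx => ?_)
  · rintro _ ⟨a, ha, x, hx, rfl⟩
    exact Submodule.smul_mem_smul ha hx
  · exact Submodule.subset_span ⟨a, ha, x, hx, rfl⟩

theorem radPow_self_eq_pow (A : Type) [Ring A] (n : ℕ) : radPow A A n = Ring.jacobson A ^ n := by
  induction n with
  | zero => exact Ideal.one_eq_top.symm
  | succ n ih =>
    rw [radPow, ih, smulSub_eq_smul, jacobsonRad, Ideal.jacobson_bot, smul_eq_mul,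
      Ideal.IsTwoSided.pow_succ]

theorem stmt15_general (A : Type) [Ring A] [IsSemisimpleRing (A ⧸ Ring.jacobson A)] (m : ℕ)
    (N : Type) [AddCommGroup N] [Module (Module.End A (ADRModule A m)) N] :
    pdLE (Module.End A (ADRModule A m)) m N := by
  have hrad : radPow A A = fun n => Ring.jacobson A ^ n := funext (radPow_self_eq_pow A)
  revert N
  unfold ADRModule
  rw [hrad]
  intro N _ _
  exact pdLE_of_hasProjectiveDimensionLT
    ((isStronglyHeredityChain_idealTorsion_pow (Ring.jacobson A) m).hasProjectiveDimensionLT N)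

/-- for `A` of Loewy length `m ≥ 2`, the ADR algebra
`B = End_A(⊕_{j=1}^m A/J^j)` has global dimension at most `m`: every `B`-module has
projective dimension at most `m`. -/
theorem stmt15 (K : Type) [Field K] (A : Type) [Ring A] [Algebra K A] [FiniteDimensional K A]
    (m : ℕ) (hm : 2 ≤ m) (hA : radPow A A m = ⊥) (hA' : radPow A A (m - 1) ≠ ⊥) :
    ∀ (N : Type) [AddCommGroup N] [Module (Module.End A (ADRModule A m)) N],
      pdLE (Module.End A (ADRModule A m)) m N := by
  have : IsArtinianRing A := IsArtinianRing.of_finite K A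
  exact stmt15_general A m
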